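/- arXiv:0812.2126 — 4 statements merged into one kernel-verified Lean document; each statement's English description precedes it below -/
import Mathlib

section
/- Let Γ be a torsion-free affine connection on U and let ω be a nonvanishing smooth 1-form on U with ω ∧ dω = 0. Then the codimension-one foliation defined by ω is totally geodesic for Γ if and only if there exists a smooth 1-form θ on U such that d^s_Γ ω = θ·ω. -/
open scoped BigOperators

/-- Partial derivative in the `i`-th coordinate direction. -/
noncomputable def pd {n : ℕ} (i : Fin n) (f : (Fin n → ℝ) → ℝ) (x : Fin n → ℝ) : ℝ :=
  fderiv ℝ f x (Pi.single i 1)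

/-- A torsion-free affine connection on `U`, given by its Christoffel symbols `Γ k i j`
(smooth on `U` and symmetric in the lower indices `i j`). -/
def IsTorsionFreeConn {n : ℕ} (U : Set (Fin n → ℝ))
    (Γ : Fin n → Fin n → Fin n → (Fin n → ℝ) → ℝ) : Prop :=
  (∀ k i j, ContDiffOn ℝ (⊤ : ℕ∞) (Γ k i j) U) ∧ (∀ k i j x, Γ k i j x = Γ k j i x)

/-- `γ` is a geodesic of `Γ` on the set `I ⊆ ℝ`, with image in `U`. -/
def IsGeodesicOn {n : ℕ} (U : Set (Fin n → ℝ))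
    (Γ : Fin n → Fin n → Fin n → (Fin n → ℝ) → ℝ)
    (I : Set ℝ) (γ : ℝ → Fin n → ℝ) : Prop :=
  (∀ t ∈ I, γ t ∈ U) ∧ ContDiffOn ℝ 2 γ I ∧
    ∀ t ∈ I, ∀ k, deriv (fun s => deriv (fun u => γ u k) s) t +
      ∑ i, ∑ j, Γ k i j (γ t) * deriv (fun u => γ u i) t * deriv (fun u => γ u j) t = 0

/-- The codimension-one foliation defined by the `1`-form `ω` is totally geodesic for `Γ`:
every geodesic tangent to a leaf at time `0` stays tangent to the kernel of `ω`. -/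
def TotallyGeodesic {n : ℕ} (U : Set (Fin n → ℝ))
    (Γ : Fin n → Fin n → Fin n → (Fin n → ℝ) → ℝ)
    (ω : (Fin n → ℝ) → Fin n → ℝ) : Prop :=
  ∀ I : Set ℝ, IsOpen I → I.OrdConnected → (0 : ℝ) ∈ I →
    ∀ γ : ℝ → Fin n → ℝ, IsGeodesicOn U Γ I γ →
      (∑ k, ω (γ 0) k * deriv (fun u => γ u k) 0) = 0 →
      ∀ t ∈ I, (∑ k, ω (γ t) k * deriv (fun u => γ u k) t) = 0

/-- `ω` is a smooth nonvanishing `1`-form on `U` satisfying the integrability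
condition `ω ∧ dω = 0`. -/
def IsFoliationForm {n : ℕ} (U : Set (Fin n → ℝ)) (ω : (Fin n → ℝ) → Fin n → ℝ) : Prop :=
  ContDiffOn ℝ (⊤ : ℕ∞) ω U ∧ (∀ x ∈ U, ω x ≠ 0) ∧
    ∀ x ∈ U, ∀ i j k,
      ω x i * (pd j (fun y => ω y k) x - pd k (fun y => ω y j) x) +
      ω x j * (pd k (fun y => ω y i) x - pd i (fun y => ω y k) x) +
      ω x k * (pd i (fun y => ω y j) x - pd j (fun y => ω y i) x) = 0

/-- Components of the symmetric covariant differential `d^s_Γ ω`. -/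
noncomputable def dsym {n : ℕ} (Γ : Fin n → Fin n → Fin n → (Fin n → ℝ) → ℝ)
    (ω : (Fin n → ℝ) → Fin n → ℝ) (i j : Fin n) (x : Fin n → ℝ) : ℝ :=
  (pd i (fun y => ω y j) x + pd j (fun y => ω y i) x) / 2 - ∑ k, Γ k i j x * ω x k

/-- Components of the symmetric product `θ·ω` of two `1`-forms. -/
noncomputable def symProd {n : ℕ} (θ ω : (Fin n → ℝ) → Fin n → ℝ) (i j : Fin n) (x : Fin n → ℝ) : ℝ :=
  (θ x i * ω x j + θ x j * ω x i) / 2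

/-- A `d`-web of hypersurfaces on `U`: a family of smooth nonvanishing integrable `1`-forms,
any `n` of which are linearly independent at every point of `U`. -/
def IsWeb {n d : ℕ} (U : Set (Fin n → ℝ)) (ωs : Fin d → (Fin n → ℝ) → Fin n → ℝ) : Prop :=
  (∀ i, IsFoliationForm U (ωs i)) ∧
    ∀ x ∈ U, ∀ σ : Fin n → Fin d, Function.Injective σ →
      LinearIndependent ℝ (fun i => ωs (σ i) x)

/-- `Γ` and `Γ'` are projectively equivalent on `U`:
`Γ'ᵏᵢⱼ = Γᵏᵢⱼ + δᵏᵢ ρⱼ + δᵏⱼ ρᵢ` for some smooth `1`-form `ρ`. -/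
def ProjEquiv {n : ℕ} (U : Set (Fin n → ℝ))
    (Γ Γ' : Fin n → Fin n → Fin n → (Fin n → ℝ) → ℝ) : Prop :=
  ∃ ρ : (Fin n → ℝ) → Fin n → ℝ, ContDiffOn ℝ (⊤ : ℕ∞) ρ U ∧
    ∀ x ∈ U, ∀ k i j, Γ' k i j x =
      Γ k i j x + (if k = i then ρ x j else 0) + (if k = j then ρ x i else 0)

/-- `X` is the frame of vector fields dual to the coframe `ωs` on `U`. -/
def IsDualFrame {n : ℕ} (U : Set (Fin n → ℝ)) (ωs : Fin n → (Fin n → ℝ) → Fin n → ℝ)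
    (X : Fin n → (Fin n → ℝ) → Fin n → ℝ) : Prop :=
  (∀ i, ContDiffOn ℝ (⊤ : ℕ∞) (X i) U) ∧
    ∀ x ∈ U, ∀ i j, (∑ k, ωs i x k * X j x k) = if i = j then 1 else 0

/-- The web invariants `s^a_{ij} = (1/(aᵢ−aⱼ))·(aᵢ ∂ⱼ − aⱼ ∂ᵢ) log (aⱼ/aᵢ)`, where `∂ᵢ`
is derivation along the frame vector field `X i`. -/
noncomputable def sInv {n : ℕ} (X : Fin n → (Fin n → ℝ) → Fin n → ℝ)
    (a : Fin n → (Fin n → ℝ) → ℝ) (i j : Fin n) (x : Fin n → ℝ) : ℝ :=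
  (1 / (a i x - a j x)) *
    (a i x * (fderiv ℝ (a j) x (X j x) / a j x - fderiv ℝ (a i) x (X j x) / a i x) -
     a j x * (fderiv ℝ (a j) x (X i x) / a j x - fderiv ℝ (a i) x (X i x) / a i x))

/-- The curvature tensor `Rᵏₗᵢⱼ` of the connection `Γ`. -/
noncomputable def curv {n : ℕ} (Γ : Fin n → Fin n → Fin n → (Fin n → ℝ) → ℝ)
    (k l i j : Fin n) (x : Fin n → ℝ) : ℝ :=
  pd i (Γ k j l) x - pd j (Γ k i l) x +
    ∑ m, (Γ k i m x * Γ m j l x - Γ k j m x * Γ m i l x)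

/-- The directional derivative of a function is the sum of its partial derivatives weighted by
the components of the direction. -/
lemma fderiv_apply_eq_sum_pd {n : ℕ} (f : (Fin n → ℝ) → ℝ) (x v : Fin n → ℝ) :
    fderiv ℝ f x v = ∑ i, pd i f x * v i := by
  conv_lhs => rw [pi_eq_sum_univ' v]
  simp only [map_sum, map_smul, smul_eq_mul, pd]
  exact Finset.sum_congr rfl fun i _ => mul_comm _ _

/-- The quadratic form of `d^s_Γ ω` is the derivative of `ω(γ̇)` along a curve `γ` with velocity
`v` and acceleration `-Γ(v, v)`. -/
lemma sum_dsym_mul_mul {n : ℕ} (Γ : Fin n → Fin n → Fin n → (Fin n → ℝ) → ℝ)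
    (ω : (Fin n → ℝ) → Fin n → ℝ) (x v : Fin n → ℝ) :
    ∑ i, ∑ j, dsym Γ ω i j x * v i * v j =
      ∑ k, ((∑ i, pd i (fun y => ω y k) x * v i) * v k +
        ω x k * -∑ i, ∑ j, Γ k i j x * v i * v j) := by
  have hsymm : ∑ i, ∑ j, pd j (fun y => ω y i) x * v i * v j =
      ∑ i, ∑ j, pd i (fun y => ω y j) x * v i * v j := by
    rw [Finset.sum_comm]
    exact Finset.sum_congr rfl fun i _ => Finset.sum_congr rfl fun j _ => by ring
  have hderiv : ∑ k, (∑ i, pd i (fun y => ω y k) x * v i) * v k =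
      ∑ i, ∑ j, pd i (fun y => ω y j) x * v i * v j := by
    rw [Finset.sum_comm]
    exact Finset.sum_congr rfl fun i _ => Finset.sum_mul _ _ _
  have hconn : ∑ k, ω x k * ∑ i, ∑ j, Γ k i j x * v i * v j =
      ∑ i, ∑ j, (∑ k, Γ k i j x * ω x k) * v i * v j := by
    simp only [Finset.mul_sum, Finset.sum_mul]
    rw [Finset.sum_comm]
    refine Finset.sum_congr rfl fun i _ => ?_
    rw [Finset.sum_comm]
    exact Finset.sum_congr rfl fun j _ => Finset.sum_congr rfl fun k _ => by ring
  have hsplit : ∑ i, ∑ j, dsym Γ ω i j x * v i * v j =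
      (∑ i, ∑ j, pd i (fun y => ω y j) x * v i * v j +
        ∑ i, ∑ j, pd j (fun y => ω y i) x * v i * v j) / 2 -
        ∑ i, ∑ j, (∑ k, Γ k i j x * ω x k) * v i * v j := by
    simp only [← Finset.sum_add_distrib, Finset.sum_div, ← Finset.sum_sub_distrib]
    exact Finset.sum_congr rfl fun i _ => Finset.sum_congr rfl fun j _ => by
      unfold dsym; ring
  simp only [mul_neg, Finset.sum_add_distrib, Finset.sum_neg_distrib]
  rw [hsplit, hderiv, hconn, hsymm]
  ring

section Geodesics

variable {n : ℕ} {U : Set (Fin n → ℝ)} {Γ : Fin n → Fin n → Fin n → (Fin n → ℝ) → ℝ}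
  {ω : (Fin n → ℝ) → Fin n → ℝ} {I : Set ℝ} {γ : ℝ → Fin n → ℝ} {t : ℝ}

lemma IsGeodesicOn.contDiffOn_apply (hγ : IsGeodesicOn U Γ I γ) (k : Fin n) :
    ContDiffOn ℝ 2 (fun u => γ u k) I :=
  contDiffOn_pi.1 hγ.2.1 k

lemma IsGeodesicOn.contDiffOn_deriv (hγ : IsGeodesicOn U Γ I γ) (hI : IsOpen I) (k : Fin n) :
    ContDiffOn ℝ 1 (deriv fun u => γ u k) I :=
  (hγ.contDiffOn_apply k).deriv_of_isOpen hI (by norm_num)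

lemma IsGeodesicOn.hasDerivAt_apply (hγ : IsGeodesicOn U Γ I γ) (hI : IsOpen I) (ht : t ∈ I)
    (k : Fin n) : HasDerivAt (fun u => γ u k) (deriv (fun u => γ u k) t) t :=
  (((hγ.contDiffOn_apply k).contDiffAt (hI.mem_nhds ht)).differentiableAt
    (by norm_num)).hasDerivAt

/-- Along a geodesic, the derivative of `ω(γ̇)` is `(d^s_Γ ω)(γ̇, γ̇)`. -/
lemma IsGeodesicOn.hasDerivAt_pairing (hγ : IsGeodesicOn U Γ I γ) (hU : IsOpen U)
    (hω : ContDiffOn ℝ (⊤ : ℕ∞) ω U) (hI : IsOpen I) (ht : t ∈ I) :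
    HasDerivAt (fun s => ∑ k, ω (γ s) k * deriv (fun u => γ u k) s)
      (∑ i, ∑ j, dsym Γ ω i j (γ t) * deriv (fun u => γ u i) t * deriv (fun u => γ u j) t) t := by
  rw [sum_dsym_mul_mul Γ ω (γ t) fun k => deriv (fun u => γ u k) t]
  refine HasDerivAt.fun_sum fun k _ => HasDerivAt.fun_mul ?_ ?_
  · have hωk : DifferentiableAt ℝ (fun y => ω y k) (γ t) :=
      ((contDiffOn_pi.1 hω k).contDiffAt (hU.mem_nhds (hγ.1 t ht))).differentiableAt (by simp)
    have hvel : HasDerivAt γ (fun k => deriv (fun u => γ u k) t) t :=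
      hasDerivAt_pi.2 (hγ.hasDerivAt_apply hI ht)
    rw [← fderiv_apply_eq_sum_pd]
    exact hωk.hasFDerivAt.comp_hasDerivAt t hvel
  · have hacc := (((hγ.contDiffOn_deriv hI k).contDiffAt (hI.mem_nhds ht)).differentiableAt
      (by norm_num)).hasDerivAt
    rwa [eq_neg_of_add_eq_zero_left (hγ.2.2 t ht k)] at hacc

/-- Through every point of `U` there is a geodesic with prescribed velocity. -/
lemma exists_isGeodesicOn (hU : IsOpen U) (hΓ : IsTorsionFreeConn U Γ) {x : Fin n → ℝ}
    (hx : x ∈ U) (v : Fin n → ℝ) :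
    ∃ ε > 0, ∃ γ : ℝ → Fin n → ℝ, IsGeodesicOn U Γ (Set.Ioo (-ε) ε) γ ∧ γ 0 = x ∧
      ∀ k, deriv (fun u => γ u k) 0 = v k := by
  let F : (Fin n → ℝ) × (Fin n → ℝ) → (Fin n → ℝ) × (Fin n → ℝ) := fun p =>
    (p.2, fun k => -∑ i, ∑ j, Γ k i j p.1 * p.2 i * p.2 j)
  have hF : ∀ p : (Fin n → ℝ) × (Fin n → ℝ), p.1 ∈ U → ContDiffAt ℝ 1 F p := by
    intro p hp
    refine contDiffAt_snd.prodMk (contDiffAt_pi.2 fun k => ContDiffAt.neg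
      (ContDiffAt.sum fun i _ => ContDiffAt.sum fun j _ => ContDiffAt.mul (ContDiffAt.mul ?_ ?_) ?_))
    · exact ((((hΓ.1 k i j).contDiffAt (hU.mem_nhds hp)).of_le (by simp)).comp p contDiffAt_fst)
    · exact (contDiffAt_pi.1 contDiffAt_snd) i
    · exact (contDiffAt_pi.1 contDiffAt_snd) j
  obtain ⟨α, hα0, δ, hδ, hα⟩ :=
    (hF (x, v) hx).exists_forall_mem_closedBall_exists_eq_forall_mem_Ioo_hasDerivAt₀ 0
  rw [zero_sub, zero_add] at hα
  have hα_mem : ∀ᶠ t in nhds (0 : ℝ), (α t).1 ∈ U := by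
    have hcont : ContinuousAt (fun t => (α t).1) 0 :=
      continuousAt_fst.comp (hα 0 ⟨by linarith, hδ⟩).continuousAt
    exact hcont (by simpa [hα0] using hU.mem_nhds hx)
  obtain ⟨η, hη, hηU⟩ := Metric.eventually_nhds_iff.1 hα_mem
  have hε : 0 < min δ η := lt_min hδ hη
  set J := Set.Ioo (-min δ η) (min δ η)
  have hJU : ∀ t ∈ J, (α t).1 ∈ U := fun t ht => hηU (by
    rw [Real.dist_eq, sub_zero]
    exact (abs_lt.2 ht).trans_le (min_le_right _ _))
  have hJα : ∀ t ∈ J, HasDerivAt α (F (α t)) t := fun t ht =>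
    hα t (abs_lt.1 ((abs_lt.2 ht).trans_le (min_le_left _ _)))
  have h0 : (0 : ℝ) ∈ J := ⟨by linarith, hε⟩
  have hpos : ∀ t ∈ J, ∀ k, HasDerivAt (fun u => (α u).1 k) ((α t).2 k) t := fun t ht =>
    hasDerivAt_pi.1 (hJα t ht).fst
  have hvel : ∀ t ∈ J, ∀ k, HasDerivAt (fun u => (α u).2 k) ((F (α t)).2 k) t := fun t ht =>
    hasDerivAt_pi.1 (hJα t ht).snd
  have hderiv : ∀ k, Set.EqOn (deriv fun u => (α u).1 k) (fun u => (α u).2 k) J :=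
    fun k t ht => (hpos t ht k).deriv
  have hαC1 : ContDiffOn ℝ 1 α J := by
    rw [← zero_add (1 : WithTop ℕ∞), contDiffOn_succ_iff_deriv_of_isOpen isOpen_Ioo]
    refine ⟨fun t ht => (hJα t ht).differentiableAt.differentiableWithinAt, by simp, ?_⟩
    rw [contDiffOn_zero]
    refine ContinuousOn.congr (f := fun t => F (α t)) (fun t ht => ?_) fun t ht => (hJα t ht).deriv
    exact (ContinuousAt.comp (hF _ (hJU t ht)).continuousAt
      (hJα t ht).continuousAt).continuousWithinAt
  refine ⟨min δ η, hε, fun t => (α t).1, ⟨hJU, contDiffOn_pi.2 fun k => ?_, fun t ht k => ?_⟩,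
    by simp [hα0], fun k => by simp [(hpos 0 h0 k).deriv, hα0]⟩
  · rw [← one_add_one_eq_two, contDiffOn_succ_iff_deriv_of_isOpen isOpen_Ioo]
    refine ⟨fun t ht => (hpos t ht k).differentiableAt.differentiableWithinAt, by simp, ?_⟩
    exact (contDiffOn_pi.1 (contDiff_snd.comp_contDiffOn hαC1) k).congr (hderiv k)
  · have hacc : deriv (fun s => deriv (fun u => (α u).1 k) s) t = (F (α t)).2 k :=
      (((hderiv k).eventuallyEq_of_mem (isOpen_Ioo.mem_nhds ht)).deriv_eq).trans
        (hvel t ht k).deriv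
    rw [hacc]
    simp only [(hpos t ht _).deriv]
    exact neg_add_cancel _

/-- For a totally geodesic foliation, `d^s_Γ ω` vanishes on vectors tangent to the leaves. -/
lemma TotallyGeodesic.sum_dsym_eq_zero (h : TotallyGeodesic U Γ ω) (hU : IsOpen U)
    (hΓ : IsTorsionFreeConn U Γ) (hω : ContDiffOn ℝ (⊤ : ℕ∞) ω U) {x : Fin n → ℝ} (hx : x ∈ U)
    {v : Fin n → ℝ} (hv : ∑ k, ω x k * v k = 0) :
    ∑ i, ∑ j, dsym Γ ω i j x * v i * v j = 0 := by
  obtain ⟨ε, hε, γ, hγ, rfl, hγv⟩ := exists_isGeodesicOn hU hΓ hx v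
  have h0 : (0 : ℝ) ∈ Set.Ioo (-ε) ε := ⟨by linarith, hε⟩
  have hpair := h _ isOpen_Ioo Set.ordConnected_Ioo h0 γ hγ (by simpa only [hγv] using hv)
  have hderiv := hγ.hasDerivAt_pairing hU hω isOpen_Ioo h0
  simp only [hγv] at hderiv
  refine hderiv.unique ((hasDerivAt_const (0 : ℝ) (0 : ℝ)).congr_of_eventuallyEq ?_)
  filter_upwards [isOpen_Ioo.mem_nhds h0] with t ht using hpair t ht

end Geodesics

/-- A solution of a scalar homogeneous linear differential equation that vanishes at one point of
an open interval vanishes on the whole interval. -/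
lemma eq_zero_of_hasDerivAt_mul {I : Set ℝ} (hI : IsOpen I) (hconn : I.OrdConnected)
    {f a : ℝ → ℝ} (ha : ContinuousOn a I) (hf : ∀ t ∈ I, HasDerivAt f (a t * f t) t)
    {t₀ t : ℝ} (ht₀ : t₀ ∈ I) (hft₀ : f t₀ = 0) (ht : t ∈ I) : f t = 0 := by
  have hmin : min t₀ t ∈ I := by rcases min_choice t₀ t with h | h <;> rwa [h]
  have hmax : max t₀ t ∈ I := by rcases max_choice t₀ t with h | h <;> rwa [h]
  obtain ⟨b, hb, hbI⟩ : ∃ b > max t₀ t, b ∈ I :=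
    ((Filter.Eventually.filter_mono nhdsWithin_le_nhds (hI.mem_nhds hmax)).and
      self_mem_nhdsWithin : ∀ᶠ b in nhdsWithin (max t₀ t) (Set.Ioi _), _).exists.imp
      fun _ h => h.symm
  obtain ⟨c, hc, hcI⟩ : ∃ c < min t₀ t, c ∈ I :=
    ((Filter.Eventually.filter_mono nhdsWithin_le_nhds (hI.mem_nhds hmin)).and
      self_mem_nhdsWithin : ∀ᶠ c in nhdsWithin (min t₀ t) (Set.Iio _), _).exists.imp
      fun _ h => h.symm
  have hsub : Set.Icc c b ⊆ I := hconn.out hcI hbI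
  obtain ⟨K, hK⟩ := isCompact_Icc.exists_bound_of_continuousOn (ha.mono hsub)
  have hsubI : Set.Ioo c b ⊆ I := Set.Ioo_subset_Icc_self.trans hsub
  refine ODE_solution_unique_of_mem_Ioo (v := fun t y => a t * y) (s := fun _ => Set.univ)
    (g := fun _ => 0) (K := K.toNNReal) (t₀ := t₀) (fun s hs => ?_)
    ⟨hc.trans_le (min_le_left _ _), (le_max_left _ _).trans_lt hb⟩
    (fun s hs => ⟨hf s (hsubI hs), trivial⟩)
    (fun s _ => ⟨by simpa using hasDerivAt_const s (0 : ℝ), trivial⟩) hft₀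
    ⟨hc.trans_le (min_le_right _ _), (le_max_right _ _).trans_lt hb⟩
  refine (LipschitzWith.of_dist_le_mul fun y z => ?_).lipschitzOnWith
  rw [Real.dist_eq, Real.dist_eq, ← mul_sub, abs_mul]
  gcongr
  exact (hK s (Set.Ioo_subset_Icc_self hs)).trans (Real.le_coe_toNNReal K)

/-- A symmetric bilinear form whose quadratic form vanishes on the kernel of a linear form `φ` is
the symmetric product of `φ` with an explicit linear form. -/
lemma LinearMap.BilinForm.apply_eq_of_apply_self_eq_zero_on_ker {V : Type*} [AddCommGroup V]
    [Module ℝ V] (B : LinearMap.BilinForm ℝ V) (hB : ∀ v w, B v w = B w v) (φ : V →ₗ[ℝ] ℝ) (N : V)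
    (hN : φ N = 1) (hker : ∀ v, φ v = 0 → B v v = 0) (v w : V) :
    B v w = ((2 * B v N - B N N * φ v) * φ w + (2 * B w N - B N N * φ w) * φ v) / 2 := by
  have hproj : ∀ u, φ (u - φ u • N) = 0 := fun u => by simp [hN]
  have hv := hker _ (hproj v)
  have hw := hker _ (hproj w)
  have hvw := hker _ (by rw [map_add, hproj v, hproj w, add_zero] :
    φ ((v - φ v • N) + (w - φ w • N)) = 0)
  simp only [map_add, map_sub, map_smul, LinearMap.add_apply, LinearMap.sub_apply,
    LinearMap.smul_apply, smul_eq_mul, hB N v, hB N w, hB w v] at hv hw hvw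
  linarith

/-- Coordinate version of `LinearMap.BilinForm.apply_eq_of_apply_self_eq_zero_on_ker`. -/
lemma eq_symmetric_product_of_quadratic_eq_zero {n : ℕ} (S : Fin n → Fin n → ℝ)
    (hS : ∀ i j, S i j = S j i) (w N : Fin n → ℝ) (hN : ∑ k, w k * N k = 1)
    (hker : ∀ v : Fin n → ℝ, ∑ k, w k * v k = 0 → ∑ i, ∑ j, S i j * v i * v j = 0)
    (i j : Fin n) :
    S i j = ((2 * ∑ k, S i k * N k - (∑ k, ∑ l, S k l * N k * N l) * w i) * w j +
      (2 * ∑ k, S j k * N k - (∑ k, ∑ l, S k l * N k * N l) * w j) * w i) / 2 := by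
  classical
  let B : LinearMap.BilinForm ℝ (Fin n → ℝ) := Matrix.toBilin' (Matrix.of S)
  let φ : (Fin n → ℝ) →ₗ[ℝ] ℝ := ∑ k, w k • LinearMap.proj k
  have hφ : ∀ v, φ v = ∑ k, w k * v k := fun v => by simp [φ]
  have hBvw : ∀ u v, B u v = ∑ k, ∑ l, S k l * u k * v l := fun u v => by
    simp only [B, Matrix.toBilin'_apply, Matrix.of_apply]
    exact Finset.sum_congr rfl fun k _ => Finset.sum_congr rfl fun l _ => by ring
  have hB : ∀ u v, B u v = B v u := fun u v => by
    rw [hBvw, hBvw, Finset.sum_comm]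
    exact Finset.sum_congr rfl fun k _ => Finset.sum_congr rfl fun l _ => by rw [hS]; ring
  have hBe : ∀ i v, B (Pi.single i 1) v = ∑ k, S i k * v k := fun i v => by
    rw [hBvw, Finset.sum_eq_single i (fun k _ hk => by simp [hk]) (by simp)]
    simp
  have hφe : ∀ i, φ (Pi.single i 1) = w i := fun i => by simp [hφ, Pi.single_apply]
  have key := B.apply_eq_of_apply_self_eq_zero_on_ker hB φ N (by rw [hφ, hN])
    (fun v hv => by rw [hBvw]; exact hker v (by rw [← hφ, hv])) (Pi.single i 1) (Pi.single j 1)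
  simp only [hBe, hφe, hBvw N N] at key
  simpa [Pi.single_apply] using key

lemma dsym_symm {n : ℕ} {U : Set (Fin n → ℝ)} {Γ : Fin n → Fin n → Fin n → (Fin n → ℝ) → ℝ}
    (hΓ : IsTorsionFreeConn U Γ) (ω : (Fin n → ℝ) → Fin n → ℝ) (i j : Fin n) (x : Fin n → ℝ) :
    dsym Γ ω i j x = dsym Γ ω j i x := by
  simp only [dsym, hΓ.2 _ i j, add_comm]

lemma contDiffOn_dsym {n : ℕ} {U : Set (Fin n → ℝ)} (hU : IsOpen U)
    {Γ : Fin n → Fin n → Fin n → (Fin n → ℝ) → ℝ} (hΓ : IsTorsionFreeConn U Γ)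
    {ω : (Fin n → ℝ) → Fin n → ℝ} (hω : ContDiffOn ℝ (⊤ : ℕ∞) ω U) (i j : Fin n) :
    ContDiffOn ℝ (⊤ : ℕ∞) (dsym Γ ω i j) U := by
  have hpd : ∀ i j, ContDiffOn ℝ (⊤ : ℕ∞) (pd i fun y => ω y j) U := fun i j =>
    ((contDiffOn_pi.1 hω j).fderiv_of_isOpen hU (by simp)).clm_apply contDiffOn_const
  exact (((hpd i j).add (hpd j i)).div_const 2).sub
    (ContDiffOn.sum fun k _ => (hΓ.1 k i j).mul (contDiffOn_pi.1 hω k))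

/-- the foliation of a nonvanishing integrable 1-form `ω` is totally geodesic
for a torsion-free connection `Γ` iff `d^s_Γ ω = θ·ω` for some smooth 1-form `θ`. -/
theorem statement0 {n : ℕ} (hn : 2 ≤ n) (U : Set (Fin n → ℝ)) (hU : IsOpen U)
    (hUconn : IsConnected U)
    (Γ : Fin n → Fin n → Fin n → (Fin n → ℝ) → ℝ) (hΓ : IsTorsionFreeConn U Γ)
    (ω : (Fin n → ℝ) → Fin n → ℝ) (hω : IsFoliationForm U ω) :
    TotallyGeodesic U Γ ω ↔
      ∃ θ : (Fin n → ℝ) → Fin n → ℝ, ContDiffOn ℝ (⊤ : ℕ∞) θ U ∧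
        ∀ x ∈ U, ∀ i j, dsym Γ ω i j x = symProd θ ω i j x := by
  obtain ⟨hωs, hω0, -⟩ := hω
  constructor
  · intro h
    have hsq : ∀ x ∈ U, ∑ k, ω x k * ω x k ≠ 0 := fun x hx h0 => hω0 x hx <| by
      ext k
      exact mul_self_eq_zero.1
        ((Finset.sum_eq_zero_iff_of_nonneg fun k _ => mul_self_nonneg (ω x k)).1 h0 k
          (Finset.mem_univ k))
    let N : Fin n → (Fin n → ℝ) → ℝ := fun k x => ω x k / ∑ l, ω x l * ω x l
    have hωk : ∀ k, ContDiffOn ℝ (⊤ : ℕ∞) (fun x => ω x k) U := contDiffOn_pi.1 hωs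
    have hNs : ∀ k, ContDiffOn ℝ (⊤ : ℕ∞) (N k) U := fun k =>
      (hωk k).div (ContDiffOn.sum fun l _ => (hωk l).mul (hωk l)) hsq
    have hS := contDiffOn_dsym hU hΓ hωs
    refine ⟨fun x i => 2 * ∑ k, dsym Γ ω i k x * N k x -
      (∑ k, ∑ l, dsym Γ ω k l x * N k x * N l x) * ω x i, contDiffOn_pi.2 fun i => ?_,
      fun x hx i j => ?_⟩
    · exact (contDiffOn_const.mul (ContDiffOn.sum fun k _ => (hS i k).mul (hNs k))).sub
        ((ContDiffOn.sum fun k _ => ContDiffOn.sum fun l _ =>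
          ((hS k l).mul (hNs k)).mul (hNs l)).mul (hωk i))
    · refine eq_symmetric_product_of_quadratic_eq_zero (fun i j => dsym Γ ω i j x)
        (fun i j => dsym_symm hΓ ω i j x) (ω x) (fun k => N k x) ?_
        (fun v hv => h.sum_dsym_eq_zero hU hΓ hωs hx hv) i j
      simp only [N, mul_div_assoc', ← Finset.sum_div]
      exact div_self (hsq x hx)
  · rintro ⟨θ, hθ, hdsym⟩ I hI hconn h0 γ hγ hγ0 t ht
    refine eq_zero_of_hasDerivAt_mul hI hconn
      (f := fun s => ∑ k, ω (γ s) k * deriv (fun u => γ u k) s)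
      (a := fun s => ∑ k, θ (γ s) k * deriv (fun u => γ u k) s) ?_ (fun s hs => ?_) h0 hγ0 ht
    · refine continuousOn_finsetSum _ fun k _ => ContinuousOn.mul ?_
        (hγ.contDiffOn_deriv hI k).continuousOn
      exact (contDiffOn_pi.1 hθ k).continuousOn.comp hγ.2.1.continuousOn hγ.1
    · convert hγ.hasDerivAt_pairing hU hωs hI hs using 1
      simp only [hdsym _ (hγ.1 s hs), symProd]
      set v : Fin n → ℝ := fun k => deriv (fun u => γ u k) s
      have hprod : ∑ i, ∑ j, (θ (γ s) i * ω (γ s) j) * v i * v j =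
          (∑ k, θ (γ s) k * v k) * ∑ k, ω (γ s) k * v k := by
        rw [Finset.sum_mul_sum]
        exact Finset.sum_congr rfl fun i _ => Finset.sum_congr rfl fun j _ => by ring
      have hswap : ∑ i, ∑ j, (θ (γ s) j * ω (γ s) i) * v i * v j =
          ∑ i, ∑ j, (θ (γ s) i * ω (γ s) j) * v i * v j := by
        rw [Finset.sum_comm]
        exact Finset.sum_congr rfl fun i _ => Finset.sum_congr rfl fun j _ => by ring
      calc (∑ k, θ (γ s) k * v k) * ∑ k, ω (γ s) k * v k
          = (∑ i, ∑ j, (θ (γ s) i * ω (γ s) j) * v i * v j +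
              ∑ i, ∑ j, (θ (γ s) j * ω (γ s) i) * v i * v j) / 2 := by
            rw [hswap, hprod]; ring
        _ = ∑ i, ∑ j, (θ (γ s) i * ω (γ s) j + θ (γ s) j * ω (γ s) i) / 2 * v i * v j := by
            simp only [← Finset.sum_add_distrib, Finset.sum_div]
            exact Finset.sum_congr rfl fun i _ => Finset.sum_congr rfl fun j _ => by ring
end

section
/- Let q be a symmetric bilinear form on ℝⁿ and let ω be a nonzero linear functional on ℝⁿ. If q(v, w) = 0 for all v, w in the kernel of ω, then there exists a unique linear functional θ on ℝⁿ such that q = ½(θ ⊗ ω + ω ⊗ θ). -/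
open scoped BigOperators

/-- a symmetric bilinear form vanishing on the kernel of a nonzero linear
functional `ω` factors uniquely as `q = ½(θ ⊗ ω + ω ⊗ θ)`. -/
theorem statement2 {n : ℕ} (hn : 2 ≤ n)
    (q : (Fin n → ℝ) →ₗ[ℝ] (Fin n → ℝ) →ₗ[ℝ] ℝ) (hq : ∀ v w, q v w = q w v)
    (ω : (Fin n → ℝ) →ₗ[ℝ] ℝ) (hω : ω ≠ 0)
    (h : ∀ v ∈ LinearMap.ker ω, ∀ w ∈ LinearMap.ker ω, q v w = 0) :
    ∃! θ : (Fin n → ℝ) →ₗ[ℝ] ℝ, ∀ v w, q v w = (θ v * ω w + ω v * θ w) / 2 := by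
  obtain ⟨e, he⟩ : ∃ e, ω e = 1 := LinearMap.surjective hω 1
  refine ⟨(2 : ℝ) • q e - q e e • ω, fun v w => ?_, fun θ hθ => ?_⟩
  · have hker : ∀ u, u - ω u • e ∈ LinearMap.ker ω := fun u => by simp [he]
    have key := h _ (hker v) _ (hker w)
    simp only [map_sub, map_smul, LinearMap.sub_apply, LinearMap.smul_apply, smul_eq_mul,
      hq v e] at key ⊢
    linear_combination key
  · refine LinearMap.ext fun v => ?_
    have hee := hθ e e
    have hev := hθ e v
    rw [he] at hee hev
    simp only [LinearMap.sub_apply, LinearMap.smul_apply, smul_eq_mul]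
    linear_combination ω v * hee - 2 * hev
end

section
/- If λ is any smooth nonvanishing function on U, then the rescaled functions (λa₁, …, λa_n) satisfy s^{λa}_{ij} = s^a_{ij} for all i ≠ j; that is, s^a_{ij} depends only on the point [a₁ : … : a_n] of projective space determined by (a₁, …, a_n). -/
open scoped BigOperators

/-- the web invariants `s^a_{ij}` are invariant under rescaling
`(a₁, …, a_n) ↦ (λa₁, …, λa_n)` by a smooth nonvanishing function `λ`; i.e. they depend
only on the point `[a₁ : … : a_n]` of projective space. -/
theorem statement7 {n : ℕ} (hn : 2 ≤ n) (U : Set (Fin n → ℝ)) (hU : IsOpen U)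
    (hUconn : IsConnected U)
    (ωs : Fin n → (Fin n → ℝ) → Fin n → ℝ)
    (hωs : ∀ i, ContDiffOn ℝ (⊤ : ℕ∞) (ωs i) U)
    (hindep : ∀ x ∈ U, LinearIndependent ℝ (fun i => ωs i x))
    (X : Fin n → (Fin n → ℝ) → Fin n → ℝ) (hX : IsDualFrame U ωs X)
    (a : Fin n → (Fin n → ℝ) → ℝ) (ha : ∀ i, ContDiffOn ℝ (⊤ : ℕ∞) (a i) U)
    (hanz : ∀ i, ∀ x ∈ U, a i x ≠ 0)
    (hane : ∀ i j, i ≠ j → ∀ x ∈ U, a i x ≠ a j x)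
    (lam : (Fin n → ℝ) → ℝ) (hlam : ContDiffOn ℝ (⊤ : ℕ∞) lam U)
    (hlamnz : ∀ x ∈ U, lam x ≠ 0) :
    ∀ i j, i ≠ j → ∀ x ∈ U,
      sInv X (fun i y => lam y * a i y) i j x = sInv X a i j x := by
  intro i j _ x hx
  have hdiff : ∀ f : (Fin n → ℝ) → ℝ, ContDiffOn ℝ (⊤ : ℕ∞) f U → DifferentiableAt ℝ f x :=
    fun f hf => (hf.contDiffAt (hU.mem_nhds hx)).differentiableAt (by simp)
  have hl := hlamnz x hx
  have hlog : ∀ k v, fderiv ℝ (fun y => lam y * a k y) x v / (lam x * a k x) =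
      fderiv ℝ lam x v / lam x + fderiv ℝ (a k) x v / a k x := by
    intro k v
    have hk := hanz k x hx
    rw [fderiv_fun_mul (hdiff _ hlam) (hdiff _ (ha k))]
    simp only [add_apply, smul_apply, smul_eq_mul]
    field_simp
    ring
  simp only [sInv, hlog, add_sub_add_left_eq_sub, ← mul_sub, mul_assoc]
  field_simp
end

section
/- For every (n+2)-web of hypersurfaces ⟨ω₁, …, ω_{n+2}⟩ on U there exists a torsion-free affine connection Γ on U for which the web is geodesic. -/
open scoped BigOperators

/-- The `(i, j)` entry is the derivative of the `j`-th component in direction `i`. -/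
noncomputable def formJacobian {n : ℕ} (ω : (Fin n → ℝ) → Fin n → ℝ) (x : Fin n → ℝ) :
    Matrix (Fin n) (Fin n) ℝ :=
  fun i j => pd i (fun y => ω y j) x

theorem contDiffOn_formJacobian {n : ℕ} {U : Set (Fin n → ℝ)} (hU : IsOpen U)
    {ω : (Fin n → ℝ) → Fin n → ℝ} (hω : ContDiffOn ℝ (⊤ : ℕ∞) ω U) (i j : Fin n) :
    ContDiffOn ℝ (⊤ : ℕ∞) (fun x => formJacobian ω x i j) U := by
  have h : ContDiffOn ℝ (⊤ : ℕ∞) (fun y => ω y j) U := contDiffOn_pi.1 hω j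
  have h' := h.fderiv_of_isOpen (m := ((⊤ : ℕ∞) : WithTop ℕ∞)) hU (by simp)
  exact h'.clm_apply contDiffOn_const

/-- A linear homogeneous scalar equation with a zero initial value has only the zero solution. -/
theorem eq_zero_of_hasDerivAt_mul_s8 {I : Set ℝ} (hIc : I.OrdConnected)
    (h0 : (0 : ℝ) ∈ I) {f g : ℝ → ℝ} (hg : ContinuousOn g I)
    (hf : ∀ t ∈ I, HasDerivAt f (g t * f t) t) (hf0 : f 0 = 0) : ∀ t ∈ I, f t = 0 := by
  intro t ht
  have hsub : Set.uIcc 0 t ⊆ I := hIc.uIcc_subset h0 ht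
  obtain ⟨K, hK⟩ := isCompact_uIcc.exists_bound_of_continuousOn (hg.mono hsub)
  have hlip : ∀ s ∈ Set.uIcc 0 t,
      LipschitzOnWith (Real.toNNReal K) (fun y => g s * y) Set.univ := by
    intro s hs
    refine LipschitzOnWith.of_dist_le_mul fun y _ z _ => ?_
    rw [Real.dist_eq, Real.dist_eq, ← mul_sub, abs_mul]
    gcongr
    exact (hK s hs).trans (Real.le_coe_toNNReal K)
  have hcont : ContinuousOn f (Set.uIcc 0 t) :=
    fun s hs => (hf s (hsub hs)).continuousAt.continuousWithinAt
  have hzero : ∀ s, HasDerivAt (fun _ : ℝ => (0 : ℝ)) (g s * 0) s := fun s => by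
    simpa using hasDerivAt_const s (0 : ℝ)
  rcases le_total 0 t with h | h
  · rw [Set.uIcc_of_le h] at *
    exact ODE_solution_unique_of_mem_Icc_right (v := fun s y => g s * y) (s := fun _ => Set.univ)
      (fun s hs => hlip s (Set.Ico_subset_Icc_self hs)) hcont
      (fun s hs => (hf s (hsub (Set.Ico_subset_Icc_self hs))).hasDerivWithinAt)
      (fun _ _ => Set.mem_univ _) continuousOn_const
      (fun s _ => (hzero s).hasDerivWithinAt) (fun _ _ => Set.mem_univ _) hf0
      (Set.right_mem_Icc.2 h)
  · rw [Set.uIcc_of_ge h] at *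
    exact ODE_solution_unique_of_mem_Icc_left (v := fun s y => g s * y) (s := fun _ => Set.univ)
      (fun s hs => hlip s (Set.Ioc_subset_Icc_self hs)) hcont
      (fun s hs => (hf s (hsub (Set.Ioc_subset_Icc_self hs))).hasDerivWithinAt)
      (fun _ _ => Set.mem_univ _) continuousOn_const
      (fun s _ => (hzero s).hasDerivWithinAt) (fun _ _ => Set.mem_univ _) hf0
      (Set.left_mem_Icc.2 h)

/-- If the symmetric covariant differential of `ω` is divisible by `ω`, then its foliation is
totally geodesic. -/
theorem totallyGeodesic_of_quadratic {n : ℕ} {U : Set (Fin n → ℝ)} (hU : IsOpen U)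
    {Γ : Fin n → Fin n → Fin n → (Fin n → ℝ) → ℝ} {ω θ : (Fin n → ℝ) → Fin n → ℝ}
    (hω : ContDiffOn ℝ (⊤ : ℕ∞) ω U) (hθ : ContinuousOn θ U)
    (h : ∀ x ∈ U, ∀ v : Fin n → ℝ, ∑ i, ∑ j, formJacobian ω x i j * v i * v j -
      ∑ k, ω x k * ∑ i, ∑ j, Γ k i j x * v i * v j = (∑ i, θ x i * v i) * ∑ k, ω x k * v k) :
    TotallyGeodesic U Γ ω := by
  rintro I hI hIc h0 γ ⟨hγU, hγ, hgeo⟩ hinit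
  have hcomp : ∀ k, ∀ t ∈ I, ContDiffAt ℝ 2 (fun u => γ u k) t := fun k t ht =>
    contDiffAt_pi.1 (hγ.contDiffAt (hI.mem_nhds ht)) k
  have hderiv : ∀ k, ∀ t ∈ I, HasDerivAt (fun u => γ u k) (deriv (fun u => γ u k) t) t :=
    fun k t ht => ((hcomp k t ht).differentiableAt (by norm_num)).hasDerivAt
  have hderiv2 : ∀ k, ∀ t ∈ I, DifferentiableAt ℝ (deriv fun u => γ u k) t := fun k t ht => by
    have hon : ContDiffOn ℝ 1 (deriv fun u => γ u k) I :=
      (contDiffOn_pi.1 hγ k).deriv_of_isOpen hI (by norm_num)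
    exact (hon.contDiffAt (hI.mem_nhds ht)).differentiableAt (by norm_num)
  refine eq_zero_of_hasDerivAt_mul_s8 hIc h0
    (g := fun t => ∑ i, θ (γ t) i * deriv (fun u => γ u i) t) ?_ ?_ hinit
  · refine continuousOn_finsetSum _ fun i _ => ContinuousOn.mul ?_ ?_
    · exact (continuousOn_pi.1 hθ i).comp hγ.continuousOn hγU
    · exact fun t ht => (hderiv2 i t ht).continuousAt.continuousWithinAt
  · intro t ht
    have hγ' : HasDerivAt γ (fun i => deriv (fun u => γ u i) t) t :=
      hasDerivAt_pi.2 fun i => hderiv i t ht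
    rw [← h _ (hγU t ht)]
    have hk : ∀ k, HasDerivAt (fun s => ω (γ s) k * deriv (fun u => γ u k) s)
        ((∑ i, formJacobian ω (γ t) i k * deriv (fun u => γ u i) t) * deriv (fun u => γ u k) t +
          ω (γ t) k * deriv (deriv fun u => γ u k) t) t := by
      intro k
      refine HasDerivAt.mul ?_ (hderiv2 k t ht).hasDerivAt
      have hd : DifferentiableAt ℝ (fun y => ω y k) (γ t) :=
        ((contDiffOn_pi.1 hω k).contDiffAt (hU.mem_nhds (hγU t ht))).differentiableAt (by simp)
      refine (hd.hasFDerivAt.comp_hasDerivAt t hγ').congr_deriv ?_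
      rw [pi_eq_sum_univ' (fun i => deriv (fun u => γ u i) t)]
      simp [formJacobian, pd, mul_comm]
    refine (HasDerivAt.fun_sum fun k _ => hk k).congr_deriv ?_
    rw [Finset.sum_add_distrib, sub_eq_add_neg]
    congr 1
    · simp_rw [Finset.sum_mul]
      exact Finset.sum_comm
    · rw [← Finset.sum_neg_distrib]
      refine Finset.sum_congr rfl fun k _ => ?_
      have := hgeo t ht k
      rw [eq_neg_of_add_eq_zero_left this, mul_neg]

section Smooth

variable {E : Type*} [NormedAddCommGroup E] [NormedSpace ℝ E] {s : Set E} {N : WithTop ℕ∞}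
  {ι : Type*} [Fintype ι] [DecidableEq ι]

theorem contDiffOn_matrix_det {M : E → Matrix ι ι ℝ}
    (hM : ∀ i j, ContDiffOn ℝ N (fun x => M x i j) s) :
    ContDiffOn ℝ N (fun x => (M x).det) s := by
  simp_rw [Matrix.det_apply']
  exact ContDiffOn.sum fun σ _ => contDiffOn_const.mul (contDiffOn_prod fun i _ => hM _ _)

theorem contDiffOn_matrix_inv {M : E → Matrix ι ι ℝ}
    (hM : ∀ i j, ContDiffOn ℝ N (fun x => M x i j) s) (hdet : ∀ x ∈ s, IsUnit (M x).det)
    (i j : ι) : ContDiffOn ℝ N (fun x => (M x)⁻¹ i j) s := by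
  have h : ∀ x, (M x)⁻¹ i j = ((M x).det)⁻¹ * ((M x).updateRow j (Pi.single i 1)).det := by
    intro x
    simp [Matrix.inv_def, Matrix.adjugate_apply]
  simp_rw [h]
  refine ((contDiffOn_matrix_det hM).inv fun x hx => (hdet x hx).ne_zero).mul
    (contDiffOn_matrix_det fun k l => ?_)
  by_cases hk : k = j
  · subst hk
    simpa using contDiffOn_const
  · simpa [hk] using hM k l

end Smooth


theorem sum_sum_mul_mul_eq_zero {ι : Type*} [Fintype ι] {M : ι → ι → ℝ}
    (hM : ∀ a b, M a b + M b a = 0) (u : ι → ℝ) : ∑ a, ∑ b, M a b * u a * u b = 0 := by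
  have hswap : ∑ a, ∑ b, M a b * u a * u b = ∑ a, ∑ b, M b a * u a * u b := by
    rw [Finset.sum_comm]
    exact Finset.sum_congr rfl fun a _ => Finset.sum_congr rfl fun b _ => by ring
  have hsum : ∑ a, ∑ b, M a b * u a * u b + ∑ a, ∑ b, M b a * u a * u b = 0 := by
    simp_rw [← Finset.sum_add_distrib]
    refine Finset.sum_eq_zero fun a _ => Finset.sum_eq_zero fun b _ => ?_
    linear_combination (u a * u b) * hM a b
  linarith

theorem sum_mul_sum_mul {ι κ : Type*} [Fintype ι] [Fintype κ] (c : ι → ℝ) (W : Matrix ι κ ℝ)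
    (v : κ → ℝ) : ∑ a, c a * ∑ i, W a i * v i = ∑ i, (∑ a, c a * W a i) * v i := by
  simp_rw [Finset.mul_sum, Finset.sum_mul, mul_assoc]
  exact Finset.sum_comm

theorem sum_sum_pullback_mul_mul {ι κ : Type*} [Fintype ι] [Fintype κ] (N : κ → κ → ℝ)
    (X : κ → ι → ℝ) (u : ι → ℝ) :
    ∑ a, ∑ b, (∑ i, ∑ j, N i j * X i a * X j b) * u a * u b =
      ∑ i, ∑ j, N i j * (∑ a, X i a * u a) * ∑ b, X j b * u b := by
  have h : ∀ i j, N i j * (∑ a, X i a * u a) * ∑ b, X j b * u b =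
      ∑ a, ∑ b, N i j * X i a * X j b * u a * u b := by
    intro i j
    rw [mul_assoc, Finset.sum_mul_sum, Finset.mul_sum]
    refine Finset.sum_congr rfl fun a _ => ?_
    rw [Finset.mul_sum]
    exact Finset.sum_congr rfl fun b _ => by ring
  simp_rw [h, Finset.sum_mul]
  calc _ = ∑ a, ∑ i, ∑ b, ∑ j, N i j * X i a * X j b * u a * u b :=
        Finset.sum_congr rfl fun a _ => Finset.sum_comm
    _ = ∑ i, ∑ a, ∑ b, ∑ j, N i j * X i a * X j b * u a * u b := Finset.sum_comm
    _ = ∑ i, ∑ a, ∑ j, ∑ b, N i j * X i a * X j b * u a * u b :=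
        Finset.sum_congr rfl fun i _ => Finset.sum_congr rfl fun a _ => Finset.sum_comm
    _ = _ := Finset.sum_congr rfl fun i _ => Finset.sum_comm

/-- The 1-form by which the second residual quadratic form becomes divisible. -/
noncomputable def secondMultiplier {ι : Type*} (c e : ι → ℝ) (R S : ι → ι → ℝ) (a : ι) : ℝ :=
  S a a / e a - R a a / c a

/-- Solution `T` of the system `c a * T a b + c b * T b a = -(R a b + R b a)`,
`e a * T a b + e b * T b a = θ a * e b + θ b * e a - (S a b + S b a)`, where `θ` is
`secondMultiplier c e R S`. -/
noncomputable def frameMultiplier {ι : Type*} [DecidableEq ι] (c e : ι → ℝ) (R S : ι → ι → ℝ)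
    (a b : ι) : ℝ :=
  if a = b then -(R a a / c a) else
    (-(R a b + R b a) * e b - c b * (secondMultiplier c e R S a * e b +
      secondMultiplier c e R S b * e a - (S a b + S b a))) / (c a * e b - c b * e a)

section Algebra

variable {ι : Type*} [Fintype ι] [DecidableEq ι] {c e : ι → ℝ} (R S : ι → ι → ℝ)

theorem frameMultiplier_first (hc : ∀ a, c a ≠ 0)
    (hce : ∀ a b, a ≠ b → c a * e b - c b * e a ≠ 0) (u : ι → ℝ) :
    ∑ a, ∑ b, R a b * u a * u b +
      ∑ a, c a * ((∑ b, frameMultiplier c e R S a b * u b) * u a) = 0 := by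
  rw [← sum_sum_mul_mul_eq_zero (M := fun a b => R a b + c a * frameMultiplier c e R S a b) ?_ u]
  · simp_rw [← Finset.sum_add_distrib, Finset.sum_mul, Finset.mul_sum, ← Finset.sum_add_distrib]
    exact Finset.sum_congr rfl fun a _ => Finset.sum_congr rfl fun b _ => by ring
  · intro a b
    rcases eq_or_ne a b with rfl | hab
    · have := hc a
      simp only [frameMultiplier, if_true]
      field_simp
      ring
    · have h1 := hce a b hab
      simp only [frameMultiplier, if_neg hab, if_neg hab.symm]
      have h3 : c b * e a - c a * e b = -(c a * e b - c b * e a) := by ring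
      rw [h3, div_neg]
      field_simp
      ring

theorem frameMultiplier_second (hc : ∀ a, c a ≠ 0) (he : ∀ a, e a ≠ 0)
    (hce : ∀ a b, a ≠ b → c a * e b - c b * e a ≠ 0) (u : ι → ℝ) :
    ∑ a, ∑ b, S a b * u a * u b +
      ∑ a, e a * ((∑ b, frameMultiplier c e R S a b * u b) * u a) =
      (∑ a, secondMultiplier c e R S a * u a) * ∑ a, e a * u a := by
  rw [← sub_eq_zero, ← sum_sum_mul_mul_eq_zero (M := fun a b => S a b +
    e a * frameMultiplier c e R S a b - secondMultiplier c e R S a * e b) ?_ u]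
  · simp_rw [← Finset.sum_add_distrib, Finset.sum_mul, Finset.mul_sum, ← Finset.sum_add_distrib,
      ← Finset.sum_sub_distrib]
    exact Finset.sum_congr rfl fun a _ => Finset.sum_congr rfl fun b _ => by ring
  · intro a b
    rcases eq_or_ne a b with rfl | hab
    · have := hc a
      have := he a
      simp only [frameMultiplier, if_true, secondMultiplier]
      field_simp
      ring
    · have h1 := hce a b hab
      simp only [frameMultiplier, if_neg hab, if_neg hab.symm]
      have h3 : c b * e a - c a * e b = -(c a * e b - c b * e a) := by ring
      rw [h3, div_neg]
      generalize secondMultiplier c e R S = θ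
      generalize hΔ : c a * e b - c b * e a = Δ at h1
      field_simp
      rw [← hΔ]
      ring

end Algebra

section Frame

variable {n : ℕ} (ωs : Fin (n + 2) → (Fin n → ℝ) → Fin n → ℝ)

/-- Rows are the first `n` forms of the web. -/
def webCoframe (x : Fin n → ℝ) : Matrix (Fin n) (Fin n) ℝ :=
  Matrix.of fun a => ωs (Fin.castAdd 2 a) x

/-- Columns are the frame dual to the first `n` forms of the web. -/
noncomputable def webFrame (x : Fin n → ℝ) : Matrix (Fin n) (Fin n) ℝ :=
  (webCoframe ωs x)⁻¹

/-- Components of the form `ωs α` in the coframe given by the first `n` forms. -/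
noncomputable def webCoord (α : Fin (n + 2)) (x : Fin n → ℝ) (a : Fin n) : ℝ :=
  ∑ k, ωs α x k * webFrame ωs x k a

/-- Frame components of the part of the derivative of `ωs α` not coming from derivatives of the
first `n` forms. -/
noncomputable def webResidual (α : Fin (n + 2)) (x : Fin n → ℝ) (a b : Fin n) : ℝ :=
  ∑ i, ∑ j, (formJacobian (ωs α) x i j -
    ∑ m, webCoord ωs α x m * formJacobian (ωs (Fin.castAdd 2 m)) x i j) *
      webFrame ωs x i a * webFrame ωs x j b

/-- Frame components of the multipliers of the first `n` forms. -/
noncomputable def webMultiplier (x : Fin n → ℝ) (a b : Fin n) : ℝ :=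
  frameMultiplier (webCoord ωs (Fin.natAdd n 0) x) (webCoord ωs (Fin.natAdd n 1) x)
    (webResidual ωs (Fin.natAdd n 0) x) (webResidual ωs (Fin.natAdd n 1) x) a b

/-- Frame components of the multiplier of the last form. -/
noncomputable def webLastMultiplier (x : Fin n → ℝ) (a : Fin n) : ℝ :=
  secondMultiplier (webCoord ωs (Fin.natAdd n 0) x) (webCoord ωs (Fin.natAdd n 1) x)
    (webResidual ωs (Fin.natAdd n 0) x) (webResidual ωs (Fin.natAdd n 1) x) a

/-- The Christoffel symbols of a connection adapted to the web, before symmetrization. -/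
noncomputable def webPreConn (k i j : Fin n) (x : Fin n → ℝ) : ℝ :=
  ∑ a, webFrame ωs x k a * (formJacobian (ωs (Fin.castAdd 2 a)) x i j -
    (∑ b, webMultiplier ωs x a b * webCoframe ωs x b i) * webCoframe ωs x a j)

/-- The Christoffel symbols of a torsion-free connection adapted to the web. -/
noncomputable def webConn (k i j : Fin n) (x : Fin n → ℝ) : ℝ :=
  (webPreConn ωs k i j x + webPreConn ωs k j i x) / 2

variable {ωs} {U : Set (Fin n → ℝ)} {x : Fin n → ℝ}

theorem IsWeb.eq_zero_of_forall_sum_eq_zero {d : ℕ} {ωs : Fin d → (Fin n → ℝ) → Fin n → ℝ}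
    (hweb : IsWeb U ωs) (hx : x ∈ U) {σ : Fin n → Fin d}
    (hσ : Function.Injective σ) {v : Fin n → ℝ} (hv : ∀ i, ∑ k, ωs (σ i) x k * v k = 0) :
    v = 0 := by
  have h : LinearIndependent ℝ (Matrix.of fun i => ωs (σ i) x).row := hweb.2 x hx σ hσ
  rw [Matrix.linearIndependent_rows_iff_isUnit] at h
  refine Matrix.mulVec_injective_of_isUnit h ?_
  rw [Matrix.mulVec_zero]
  exact funext hv

theorem IsWeb.isUnit_det_webCoframe (hweb : IsWeb U ωs) (hx : x ∈ U) :
    IsUnit (webCoframe ωs x).det := by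
  rw [← Matrix.isUnit_iff_isUnit_det, ← Matrix.linearIndependent_rows_iff_isUnit]
  exact hweb.2 x hx _ (Fin.castAdd_injective n 2)

theorem IsWeb.sum_castAdd_mul_webFrame (hweb : IsWeb U ωs) (hx : x ∈ U) (a b : Fin n) :
    ∑ k, ωs (Fin.castAdd 2 a) x k * webFrame ωs x k b = if a = b then 1 else 0 := by
  have h := Matrix.mul_nonsing_inv _ (hweb.isUnit_det_webCoframe hx)
  rw [← Matrix.one_apply, ← h]
  rfl

theorem IsWeb.webFrame_mulVec (hweb : IsWeb U ωs) (hx : x ∈ U) (v : Fin n → ℝ) (k : Fin n) :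
    ∑ a, webFrame ωs x k a * ∑ i, webCoframe ωs x a i * v i = v k := by
  have h := Matrix.nonsing_inv_mul _ (hweb.isUnit_det_webCoframe hx)
  have h' : (webFrame ωs x).mulVec ((webCoframe ωs x).mulVec v) = v := by
    rw [Matrix.mulVec_mulVec, webFrame, h, Matrix.one_mulVec]
  exact congr_fun h' k

theorem IsWeb.webCoord_natAdd_ne_zero (hweb : IsWeb U ωs) (hx : x ∈ U) (p : Fin 2) (a : Fin n) :
    webCoord ωs (Fin.natAdd n p) x a ≠ 0 := by
  intro h
  have hσ : Function.Injective (Function.update (Fin.castAdd 2) a (Fin.natAdd n p)) := by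
    intro i j hij
    by_cases hi : i = a <;> by_cases hj : j = a <;>
      simp_all [Fin.ext_iff] <;> omega
  have hv := hweb.eq_zero_of_forall_sum_eq_zero hx hσ (v := fun k => webFrame ωs x k a) ?_
  · have := hweb.sum_castAdd_mul_webFrame hx a a
    simp [fun k => congr_fun hv k] at this
  · intro i
    by_cases hi : i = a
    · subst hi
      simpa [webCoord] using h
    · simp [hi, hweb.sum_castAdd_mul_webFrame hx]

theorem IsWeb.webCoord_det_ne_zero (hweb : IsWeb U ωs) (hx : x ∈ U) {a b : Fin n} (hab : a ≠ b) :
    webCoord ωs (Fin.natAdd n 0) x a * webCoord ωs (Fin.natAdd n 1) x b -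
      webCoord ωs (Fin.natAdd n 0) x b * webCoord ωs (Fin.natAdd n 1) x a ≠ 0 := by
  intro h
  have hσ : Function.Injective (Function.update (Function.update (Fin.castAdd 2) a
      (Fin.natAdd n 0)) b (Fin.natAdd n 1)) := by
    intro i j hij
    by_cases hi : i = a <;> by_cases hj : j = a <;> by_cases hi' : i = b <;>
      by_cases hj' : j = b <;>
      simp_all [Fin.ext_iff] <;> omega
  have hsum : ∀ α, ∑ k, ωs α x k * (webCoord ωs (Fin.natAdd n 1) x b * webFrame ωs x k a -
      webCoord ωs (Fin.natAdd n 1) x a * webFrame ωs x k b) =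
      webCoord ωs (Fin.natAdd n 1) x b * (∑ k, ωs α x k * webFrame ωs x k a) -
      webCoord ωs (Fin.natAdd n 1) x a * (∑ k, ωs α x k * webFrame ωs x k b) := by
    intro α
    rw [Finset.mul_sum, Finset.mul_sum, ← Finset.sum_sub_distrib]
    exact Finset.sum_congr rfl fun k _ => by ring
  have hv := hweb.eq_zero_of_forall_sum_eq_zero hx hσ
    (v := fun k => webCoord ωs (Fin.natAdd n 1) x b * webFrame ωs x k a -
      webCoord ωs (Fin.natAdd n 1) x a * webFrame ωs x k b) ?_
  · have h1 := hsum (Fin.castAdd 2 a)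
    simp only [hweb.sum_castAdd_mul_webFrame hx, if_true, if_neg hab, mul_one, mul_zero,
      sub_zero] at h1
    refine hweb.webCoord_natAdd_ne_zero hx 1 b (h1.symm.trans ?_)
    exact Finset.sum_eq_zero fun k _ => by rw [show _ = (0 : ℝ) from congr_fun hv k, mul_zero]
  · intro i
    rw [hsum]
    by_cases hib : i = b
    · subst hib
      simp only [Function.update_self]
      change _ * webCoord ωs _ x a - _ * webCoord ωs _ x i = 0
      ring
    · rw [Function.update_of_ne hib]
      by_cases hia : i = a
      · subst hia
        simp only [Function.update_self]
        change _ * webCoord ωs _ x i - _ * webCoord ωs _ x b = 0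
        linarith
      · rw [Function.update_of_ne hia]
        simp [hweb.sum_castAdd_mul_webFrame hx, hia, hib]

theorem sum_sum_webConn (v : Fin n → ℝ) (k : Fin n) :
    ∑ i, ∑ j, webConn ωs k i j x * v i * v j =
      ∑ a, webFrame ωs x k a * (∑ i, ∑ j, formJacobian (ωs (Fin.castAdd 2 a)) x i j * v i * v j -
        (∑ b, webMultiplier ωs x a b * ∑ i, webCoframe ωs x b i * v i) *
          ∑ i, webCoframe ωs x a i * v i) := by
  have hsymm : ∑ i, ∑ j, webConn ωs k i j x * v i * v j =
      ∑ i, ∑ j, webPreConn ωs k i j x * v i * v j := by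
    rw [← sub_eq_zero, ← sum_sum_mul_mul_eq_zero
      (M := fun i j => webConn ωs k i j x - webPreConn ωs k i j x) ?_ v]
    · simp_rw [← Finset.sum_sub_distrib, sub_mul]
    · intro i j
      simp only [webConn]
      ring
  rw [hsymm]
  have hcomm : ∑ i, ∑ j, webPreConn ωs k i j x * v i * v j =
      ∑ a, ∑ i, ∑ j, webFrame ωs x k a * ((formJacobian (ωs (Fin.castAdd 2 a)) x i j -
        (∑ b, webMultiplier ωs x a b * webCoframe ωs x b i) * webCoframe ωs x a j) * v i * v j) := by
    symm
    rw [Finset.sum_comm, Finset.sum_congr rfl fun i _ => Finset.sum_comm]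
    symm
    refine Finset.sum_congr rfl fun i _ => Finset.sum_congr rfl fun j _ => ?_
    rw [webPreConn, Finset.sum_mul, Finset.sum_mul]
    exact Finset.sum_congr rfl fun a _ => by ring
  rw [hcomm]
  refine Finset.sum_congr rfl fun a _ => ?_
  rw [sum_mul_sum_mul, Finset.sum_mul_sum, ← Finset.sum_sub_distrib, Finset.mul_sum]
  refine Finset.sum_congr rfl fun i _ => ?_
  rw [← Finset.sum_sub_distrib, Finset.mul_sum]
  exact Finset.sum_congr rfl fun j _ => by ring

theorem sum_mul_sum_sum_webConn (α : Fin (n + 2)) (v : Fin n → ℝ) :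
    ∑ k, ωs α x k * ∑ i, ∑ j, webConn ωs k i j x * v i * v j =
      ∑ a, webCoord ωs α x a *
        (∑ i, ∑ j, formJacobian (ωs (Fin.castAdd 2 a)) x i j * v i * v j -
        (∑ b, webMultiplier ωs x a b * ∑ i, webCoframe ωs x b i * v i) *
          ∑ i, webCoframe ωs x a i * v i) := by
  simp_rw [sum_sum_webConn, Finset.mul_sum, webCoord, Finset.sum_mul]
  rw [Finset.sum_comm]
  simp_rw [mul_assoc]

theorem IsWeb.sum_sum_webResidual (hweb : IsWeb U ωs) (hx : x ∈ U) (α : Fin (n + 2))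
    (v : Fin n → ℝ) :
    ∑ a, ∑ b, webResidual ωs α x a b * (∑ i, webCoframe ωs x a i * v i) *
        (∑ i, webCoframe ωs x b i * v i) =
      ∑ i, ∑ j, formJacobian (ωs α) x i j * v i * v j -
        ∑ m, webCoord ωs α x m *
          ∑ i, ∑ j, formJacobian (ωs (Fin.castAdd 2 m)) x i j * v i * v j := by
  refine (sum_sum_pullback_mul_mul (fun i j => formJacobian (ωs α) x i j -
    ∑ m, webCoord ωs α x m * formJacobian (ωs (Fin.castAdd 2 m)) x i j) (webFrame ωs x) _).trans ?_
  simp_rw [hweb.webFrame_mulVec hx, sub_mul, Finset.sum_sub_distrib]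
  congr 1
  simp_rw [Finset.mul_sum, Finset.sum_mul]
  symm
  rw [Finset.sum_comm, Finset.sum_congr rfl fun i _ => Finset.sum_comm]
  simp_rw [mul_assoc]

theorem IsWeb.sum_mul_eq_sum_webCoord (hweb : IsWeb U ωs) (hx : x ∈ U) (α : Fin (n + 2))
    (v : Fin n → ℝ) :
    ∑ k, ωs α x k * v k = ∑ a, webCoord ωs α x a * ∑ i, webCoframe ωs x a i * v i := by
  conv_lhs => enter [2, k]; rw [← hweb.webFrame_mulVec hx v k]
  simp_rw [webCoord, Finset.sum_mul, Finset.mul_sum _ _ (ωs α x _)]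
  rw [Finset.sum_comm]
  simp_rw [mul_assoc]


theorem IsWeb.contDiffOn_apply (hweb : IsWeb U ωs) (α : Fin (n + 2)) (k : Fin n) :
    ContDiffOn ℝ (⊤ : ℕ∞) (fun x => ωs α x k) U :=
  contDiffOn_pi.1 (hweb.1 α).1 k

theorem IsWeb.contDiffOn_webFrame (hweb : IsWeb U ωs) (k a : Fin n) :
    ContDiffOn ℝ (⊤ : ℕ∞) (fun x => webFrame ωs x k a) U :=
  contDiffOn_matrix_inv (M := webCoframe ωs) (fun _ _ => hweb.contDiffOn_apply _ _)
    (fun _ hx => hweb.isUnit_det_webCoframe hx) k a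

theorem IsWeb.contDiffOn_webCoord (hweb : IsWeb U ωs) (α : Fin (n + 2)) (a : Fin n) :
    ContDiffOn ℝ (⊤ : ℕ∞) (fun x => webCoord ωs α x a) U :=
  ContDiffOn.sum fun _ _ => (hweb.contDiffOn_apply _ _).mul (hweb.contDiffOn_webFrame _ _)

theorem IsWeb.contDiffOn_webResidual (hweb : IsWeb U ωs) (hU : IsOpen U) (α : Fin (n + 2))
    (a b : Fin n) : ContDiffOn ℝ (⊤ : ℕ∞) (fun x => webResidual ωs α x a b) U :=
  ContDiffOn.sum fun i _ => ContDiffOn.sum fun j _ =>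
    (((contDiffOn_formJacobian hU (hweb.1 α).1 i j).sub
      (ContDiffOn.sum fun m _ => (hweb.contDiffOn_webCoord α m).mul
        (contDiffOn_formJacobian hU (hweb.1 _).1 i j))).mul
      (hweb.contDiffOn_webFrame i a)).mul (hweb.contDiffOn_webFrame j b)

theorem IsWeb.contDiffOn_webLastMultiplier (hweb : IsWeb U ωs) (hU : IsOpen U) (a : Fin n) :
    ContDiffOn ℝ (⊤ : ℕ∞) (fun x => webLastMultiplier ωs x a) U :=
  ((hweb.contDiffOn_webResidual hU _ a a).div (hweb.contDiffOn_webCoord _ a)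
    fun _ hx => hweb.webCoord_natAdd_ne_zero hx 1 a).sub
  ((hweb.contDiffOn_webResidual hU _ a a).div (hweb.contDiffOn_webCoord _ a)
    fun _ hx => hweb.webCoord_natAdd_ne_zero hx 0 a)

theorem IsWeb.contDiffOn_webMultiplier (hweb : IsWeb U ωs) (hU : IsOpen U) (a b : Fin n) :
    ContDiffOn ℝ (⊤ : ℕ∞) (fun x => webMultiplier ωs x a b) U := by
  have hR := hweb.contDiffOn_webResidual hU
  have hc := hweb.contDiffOn_webCoord
  have hθ := hweb.contDiffOn_webLastMultiplier hU
  by_cases hab : a = b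
  · simp only [webMultiplier, frameMultiplier, if_pos hab]
    exact ((hR _ a a).div (hc _ a) fun _ hx => hweb.webCoord_natAdd_ne_zero hx 0 a).neg
  · simp only [webMultiplier, frameMultiplier, if_neg hab]
    refine ContDiffOn.div ?_ (((hc _ a).mul (hc _ b)).sub ((hc _ b).mul (hc _ a)))
      fun _ hx => hweb.webCoord_det_ne_zero hx hab
    exact (((hR _ a b).add (hR _ b a)).neg.mul (hc _ b)).sub ((hc _ b).mul
      ((((hθ a).mul (hc _ b)).add ((hθ b).mul (hc _ a))).sub ((hR _ a b).add (hR _ b a))))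

theorem IsWeb.contDiffOn_webPreConn (hweb : IsWeb U ωs) (hU : IsOpen U) (k i j : Fin n) :
    ContDiffOn ℝ (⊤ : ℕ∞) (webPreConn ωs k i j) U :=
  ContDiffOn.sum fun a _ => (hweb.contDiffOn_webFrame k a).mul
    ((contDiffOn_formJacobian hU (hweb.1 _).1 i j).sub
      ((ContDiffOn.sum fun b _ => (hweb.contDiffOn_webMultiplier hU a b).mul
        (hweb.contDiffOn_apply (Fin.castAdd 2 b) i)).mul
        (hweb.contDiffOn_apply (Fin.castAdd 2 a) j)))

theorem IsWeb.isTorsionFreeConn_webConn (hweb : IsWeb U ωs) (hU : IsOpen U) :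
    IsTorsionFreeConn U (webConn ωs) := by
  refine ⟨fun k i j => ?_, fun k i j x => ?_⟩
  · exact ((hweb.contDiffOn_webPreConn hU k i j).add
      (hweb.contDiffOn_webPreConn hU k j i)).div_const 2
  · rw [webConn, webConn, add_comm]

theorem IsWeb.totallyGeodesic_castAdd (hweb : IsWeb U ωs) (hU : IsOpen U) (a : Fin n) :
    TotallyGeodesic U (webConn ωs) (ωs (Fin.castAdd 2 a)) := by
  refine totallyGeodesic_of_quadratic hU (hweb.1 _).1
    (θ := fun x i => ∑ b, webMultiplier ωs x a b * webCoframe ωs x b i) ?_ fun x hx v => ?_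
  · exact continuousOn_pi.2 fun i => (ContDiffOn.sum fun b _ =>
      (hweb.contDiffOn_webMultiplier hU a b).mul
        (hweb.contDiffOn_apply (Fin.castAdd 2 b) i)).continuousOn
  · rw [sum_mul_sum_sum_webConn]
    simp only [webCoord, hweb.sum_castAdd_mul_webFrame hx, ite_mul, one_mul, zero_mul,
      Finset.sum_ite_eq, Finset.mem_univ, if_true, sub_sub_cancel]
    rw [sum_mul_sum_mul]
    rfl

theorem IsWeb.totallyGeodesic_natAdd_zero (hweb : IsWeb U ωs) (hU : IsOpen U) :
    TotallyGeodesic U (webConn ωs) (ωs (Fin.natAdd n 0)) := by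
  refine totallyGeodesic_of_quadratic hU (hweb.1 _).1 (θ := fun _ _ => 0) continuousOn_const
    fun x hx v => ?_
  have h := frameMultiplier_first (webResidual ωs (Fin.natAdd n 0) x)
    (webResidual ωs (Fin.natAdd n 1) x) (hweb.webCoord_natAdd_ne_zero hx 0)
    (fun a b hab => hweb.webCoord_det_ne_zero hx hab) (fun a => ∑ i, webCoframe ωs x a i * v i)
  rw [hweb.sum_sum_webResidual hx] at h
  rw [sum_mul_sum_sum_webConn]
  simp only [mul_sub, Finset.sum_sub_distrib, zero_mul, Finset.sum_const_zero]
  rw [← h]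
  simp only [webMultiplier]
  ring

theorem IsWeb.totallyGeodesic_natAdd_one (hweb : IsWeb U ωs) (hU : IsOpen U) :
    TotallyGeodesic U (webConn ωs) (ωs (Fin.natAdd n 1)) := by
  refine totallyGeodesic_of_quadratic hU (hweb.1 _).1
    (θ := fun x i => ∑ a, webLastMultiplier ωs x a * webCoframe ωs x a i) ?_ fun x hx v => ?_
  · exact continuousOn_pi.2 fun i => (ContDiffOn.sum fun a _ =>
      (hweb.contDiffOn_webLastMultiplier hU a).mul
        (hweb.contDiffOn_apply (Fin.castAdd 2 a) i)).continuousOn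
  have h := frameMultiplier_second (webResidual ωs (Fin.natAdd n 0) x)
    (webResidual ωs (Fin.natAdd n 1) x) (hweb.webCoord_natAdd_ne_zero hx 0)
    (hweb.webCoord_natAdd_ne_zero hx 1)
    (fun a b hab => hweb.webCoord_det_ne_zero hx hab) (fun a => ∑ i, webCoframe ωs x a i * v i)
  rw [hweb.sum_sum_webResidual hx, ← hweb.sum_mul_eq_sum_webCoord hx] at h
  rw [sum_mul_sum_sum_webConn, ← sum_mul_sum_mul]
  simp only [webLastMultiplier]
  rw [← h]
  simp only [mul_sub, Finset.sum_sub_distrib, webMultiplier]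
  ring

end Frame

/-- every `(n+2)`-web of hypersurfaces on `U` is geodesic for some
torsion-free affine connection on `U`. -/
theorem statement8 {n : ℕ} (hn : 2 ≤ n) (U : Set (Fin n → ℝ)) (hU : IsOpen U)
    (hUconn : IsConnected U)
    (ωs : Fin (n + 2) → (Fin n → ℝ) → Fin n → ℝ) (hweb : IsWeb U ωs) :
    ∃ Γ : Fin n → Fin n → Fin n → (Fin n → ℝ) → ℝ,
      IsTorsionFreeConn U Γ ∧ ∀ i, TotallyGeodesic U Γ (ωs i) := by
  refine ⟨webConn ωs, hweb.isTorsionFreeConn_webConn hU, fun i => ?_⟩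
  refine Fin.addCases (fun a => hweb.totallyGeodesic_castAdd hU a) (fun p => ?_) i
  fin_cases p
  · exact hweb.totallyGeodesic_natAdd_zero hU
  · exact hweb.totallyGeodesic_natAdd_one hU
end
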